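/- Let r be a positive integer, let ψ be the distribution degenerate at r, let 𝒢=(V,E,λ) be a sample from Γ_{[n]}(ψ), and let 𝒢^O be its order discretization. Then for any constant ε>0, with probability tending to 1 as n→∞, Double(𝒢^O) ≥ (1−ε)·n·log n. -/

import Mathlib

open MeasureTheory ProbabilityTheory Filter Set
open scoped ENNReal NNReal Topology

noncomputable section

namespace RTG

/-- A temporal graph on vertex type `V`, given by the finite set of real time labels
attached to each potential edge (unordered pair of vertices). -/
abbrev TGraph (V : Type*) := Sym2 V → Finset ℝ

/-- `P` is a strict partial order supported on the set `s`. -/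
def StrictPartialOrderOn {α : Type*} (s : Set α) (P : α → α → Prop) : Prop :=
  (∀ a, ¬ P a a) ∧ (∀ a b c, P a b → P b c → P a c) ∧ ∀ a b, P a b → a ∈ s ∧ b ∈ s

/-- The temporal graph `Λ` contains `(H, P)` as a `δ`-temporal motif. -/
def Contains {VH V : Type*} (H : SimpleGraph VH) (P : Sym2 VH → Sym2 VH → Prop)
    (Λ : TGraph V) (δ : ℝ) : Prop :=
  ∃ Φ : VH → V, Function.Injective Φ ∧
    ∃ lab : Sym2 VH → ℝ,
      (∀ e ∈ H.edgeSet, lab e ∈ Λ (Sym2.map Φ e)) ∧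
      (∀ e f, P e f → lab e < lab f) ∧
      (∀ e ∈ H.edgeSet, ∀ f ∈ H.edgeSet, lab e - lab f < δ)

/-- The sparsity `ρ_H` of a graph `H`: the minimum over subgraphs with at least two
edges of `|V_I| / (|E_I| - 1)`. -/
def sparsity {VH : Type*} (H : SimpleGraph VH) : ℝ :=
  sInf {x : ℝ | ∃ I : H.Subgraph, 2 ≤ I.edgeSet.ncard ∧
    x = (I.verts.ncard : ℝ) / ((I.edgeSet.ncard : ℝ) - 1)}

/-- The space of label data on a single edge: a number `k` of labels together with the
tuple of `k` label values (indexed in order of sampling). -/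
abbrev LabelSpace := Σ k : ℕ, Fin k → ℝ

/-- The uniform distribution on `(0, 1]`. -/
def unif01 : Measure ℝ := volume.restrict (Set.Ioc 0 1)

/-- The uniform distribution on `{1, …, T}` (as a measure on `ℝ`). -/
def unifDisc (T : ℕ) : Measure ℝ :=
  (T : ℝ≥0∞)⁻¹ • ∑ k ∈ Finset.Icc 1 T, Measure.dirac (k : ℝ)

/-- The distribution of the label data of a single edge: the number of labels is drawn
according to `ψ` and, independently, each label value is drawn according to `ν`. -/
def edgeMeasure (ν : Measure ℝ) (ψ : Measure ℕ) : Measure LabelSpace :=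
  Measure.sum fun k => ψ {k} • (Measure.pi fun _ : Fin k => ν).map (Sigma.mk k)

/-- The doubly random temporal graph model on vertex set `V` with label value
distribution `ν` and label multiplicity distribution `ψ`: all edges receive independent
identically distributed label data. -/
def model (V : Type*) [Fintype V] [DecidableEq V] (ν : Measure ℝ) (ψ : Measure ℕ) :
    Measure (Sym2 V → LabelSpace) :=
  Measure.pi fun _ : Sym2 V => edgeMeasure ν ψ

/-- The continuous doubly random temporal graph `Γ_V(ψ)`. -/
abbrev contModel (V : Type*) [Fintype V] [DecidableEq V] (ψ : Measure ℕ) :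
    Measure (Sym2 V → LabelSpace) := model V unif01 ψ

/-- The discrete doubly random temporal graph `Γ_V(ψ, T)`. -/
abbrev discModel (V : Type*) [Fintype V] [DecidableEq V] (ψ : Measure ℕ) (T : ℕ) :
    Measure (Sym2 V → LabelSpace) := model V (unifDisc T) ψ

/-- The temporal graph determined by a sample `ω` of the model: each non-loop edge
carries the sampled set of labels. -/
def toTGraph {V : Type*} [DecidableEq V] (ω : Sym2 V → LabelSpace) : TGraph V :=
  fun e => if e.IsDiag then ∅ else Finset.image (ω e).2 Finset.univ

/-- The `T`-discretization of a temporal graph: each label `l` is replaced by `⌈T·l⌉`. -/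
def discretize {V : Type*} (T : ℕ) (Λ : TGraph V) : TGraph V :=
  fun e => (Λ e).image fun l => ((⌈(T : ℝ) * l⌉ : ℤ) : ℝ)

/-- `ψ` is a label multiplicity distribution: a probability distribution on `ℕ` with
positive finite mean and finite second moment. -/
def IsLMD (ψ : Measure ℕ) : Prop :=
  IsProbabilityMeasure ψ ∧ Integrable (fun k : ℕ => (k : ℝ)) ψ ∧
    Integrable (fun k : ℕ => (k : ℝ) ^ 2) ψ ∧ 0 < ∫ k, (k : ℝ) ∂ψ

/-- The mean `r` of a label multiplicity distribution. -/
def lmdMean (ψ : Measure ℕ) : ℝ := ∫ k, (k : ℝ) ∂ψ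

/-- The second moment `r₂` of a label multiplicity distribution. -/
def lmdSq (ψ : Measure ℕ) : ℝ := ∫ k, (k : ℝ) ^ 2 ∂ψ

/-- `q = P[Q > 0]` for a label multiplicity distribution. -/
def lmdPos (ψ : Measure ℕ) : ℝ := (ψ {k | 0 < k}).toReal

/-- `v` is reachable from the set `S` by time `t` in the temporal graph `Λ`. -/
def ReachBy {V : Type*} (Λ : TGraph V) (S : Set V) (t : ℝ) (v : V) : Prop :=
  v ∈ S ∨ ∃ (k : ℕ) (f : ℕ → V) (ts : ℕ → ℝ), 0 < k ∧ f 0 ∈ S ∧ f k = v ∧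
    (∀ i < k, ts i ∈ Λ s(f i, f (i + 1))) ∧
    (∀ i j, i < j → j < k → ts i < ts j) ∧ ts (k - 1) ≤ t

/-- The reachability ball `B_Λ(S, t)`. -/
def ball {V : Type*} (Λ : TGraph V) (S : Set V) (t : ℝ) : Set V := {v | ReachBy Λ S t v}

/-- The doubling time of the set `S` in `Λ` (with value `∞` if the reachability ball
never doubles in size). -/
def doubleTime {V : Type*} (Λ : TGraph V) (S : Set V) : ℝ≥0∞ :=
  ⨅ (t : ℝ) (_ : 0 ≤ t ∧ 2 * S.ncard ≤ (ball Λ S t).ncard), ENNReal.ofReal t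

/-- The doubling time of the temporal graph `Λ`: the maximum doubling time over all
nonempty vertex sets of size at most half the number of vertices. -/
def doubleAll {V : Type*} [Fintype V] (Λ : TGraph V) : ℝ≥0∞ :=
  ⨆ (S : Set V) (_ : S.Nonempty ∧ 2 * S.ncard ≤ Fintype.card V), doubleTime Λ S

/-- `Double⁻`: the maximum doubling time over nonempty sets of size at most `n/4`. -/
def doubleSmall {V : Type*} [Fintype V] (Λ : TGraph V) : ℝ≥0∞ :=
  ⨆ (S : Set V) (_ : S.Nonempty ∧ 4 * S.ncard ≤ Fintype.card V), doubleTime Λ S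

/-- `Double⁺`: the maximum doubling time over sets of size in `(n/4, n/2]`. -/
def doubleLarge {V : Type*} [Fintype V] (Λ : TGraph V) : ℝ≥0∞ :=
  ⨆ (S : Set V) (_ : Fintype.card V < 4 * S.ncard ∧ 2 * S.ncard ≤ Fintype.card V),
    doubleTime Λ S

/-- The partial reversal `ℛ(Λ, t)`: every label `l < t` is replaced by `t - l`. -/
def reverse {V : Type*} (Λ : TGraph V) (t : ℝ) : TGraph V :=
  fun e => (Λ e).image fun l => if l < t then t - l else l

/-- The rank of a time `x` among all the labels of the sample `ω`: the number of labels
(on genuine, non-loop, edges) that are at most `x`. -/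
def rank {V : Type*} [Fintype V] [DecidableEq V] (ω : Sym2 V → LabelSpace) (x : ℝ) : ℕ :=
  ∑ e ∈ Finset.univ.filter (fun e : Sym2 V => ¬ e.IsDiag),
    Nat.card {i : Fin (ω e).1 // (ω e).2 i ≤ x}

/-- The order discretization `𝒢^O` of the sample `ω`: each label is replaced by its rank
among all labels. -/
def orderDisc {V : Type*} [Fintype V] [DecidableEq V] (ω : Sym2 V → LabelSpace) :
    TGraph V :=
  fun e => if e.IsDiag then ∅
    else Finset.image (fun i => (rank ω ((ω e).2 i) : ℝ)) Finset.univ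


/-! ### Abstract probability lemmas -/

lemma markov_count {Ω J : Type*} [MeasurableSpace Ω] (P : Measure Ω) [IsProbabilityMeasure P]
    [Fintype J] (E : J → Set Ω) (hE : ∀ j, MeasurableSet (E j)) (K : ℝ) (hK : 0 < K) :
    P.real {ω | K ≤ ∑ j, (E j).indicator (fun _ => (1 : ℝ)) ω} ≤ (∑ j, P.real (E j)) / K := by
  have hi : ∀ j ∈ (Finset.univ : Finset J),
      Integrable ((E j).indicator (fun _ => (1 : ℝ))) P := fun j _ =>
    (integrable_const _).indicator (hE j)
  have h := mul_meas_ge_le_integral_of_nonneg (μ := P)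
    (f := fun ω => ∑ j, (E j).indicator (fun _ => (1 : ℝ)) ω)
    (Eventually.of_forall fun ω => Finset.sum_nonneg fun j _ =>
      Set.indicator_nonneg (fun _ _ => zero_le_one) _)
    (integrable_finsetSum _ hi) K
  rw [integral_finsetSum _ hi] at h
  rw [le_div_iff₀ hK, mul_comm]
  refine h.trans (le_of_eq ?_)
  refine Finset.sum_congr rfl fun j _ => ?_
  rw [integral_indicator (hE j)]
  simp

lemma second_moment {Ω J : Type*} [MeasurableSpace Ω] (P : Measure Ω) [IsProbabilityMeasure P]
    (s : Finset J) (E : J → Set Ω) (hE : ∀ j, MeasurableSet (E j)) (p δ η : ℝ)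
    (hp : 0 < p) (hη : 0 < η) (hδ : 0 ≤ δ) (hs : 0 < s.card)
    (h1 : ∀ j ∈ s, P.real (E j) = p)
    (h2 : ∀ i ∈ s, ∀ j ∈ s, i ≠ j → P.real (E i ∩ E j) ≤ p ^ 2 * (1 + δ)) :
    P.real {ω | ∑ j ∈ s, (E j).indicator (fun _ => (1 : ℝ)) ω ≤ (1 - η) * (s.card * p)} ≤
      (1 / (s.card * p) + δ) / η ^ 2 := by
  classical
  set m : ℝ := s.card * p with hm
  have hc : (0 : ℝ) < s.card := by exact_mod_cast hs
  have hm0 : 0 < m := mul_pos hc hp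
  set N : Ω → ℝ := fun ω => ∑ j ∈ s, (E j).indicator (fun _ => (1 : ℝ)) ω with hN
  have hi : ∀ j ∈ s, Integrable ((E j).indicator (fun _ => (1 : ℝ))) P := fun j _ =>
    (integrable_const _).indicator (hE j)
  have hNi : Integrable N P := integrable_finsetSum _ hi
  have hij : ∀ i j, (fun ω => (E i).indicator (fun _ => (1 : ℝ)) ω *
      (E j).indicator (fun _ => (1 : ℝ)) ω) = (E i ∩ E j).indicator (fun _ => (1 : ℝ)) := by
    intro i j
    ext ω
    by_cases h : ω ∈ E i <;> by_cases h' : ω ∈ E j <;> simp [h, h']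
  have hprod : ∀ i j, Integrable (fun ω => (E i).indicator (fun _ => (1 : ℝ)) ω *
      (E j).indicator (fun _ => (1 : ℝ)) ω) P := by
    intro i j
    rw [hij]
    exact (integrable_const _).indicator ((hE i).inter (hE j))
  have hN2 : (fun ω => N ω ^ 2) = fun ω => ∑ i ∈ s, ∑ j ∈ s,
      (E i).indicator (fun _ => (1 : ℝ)) ω * (E j).indicator (fun _ => (1 : ℝ)) ω := by
    ext ω
    rw [hN, sq, Finset.sum_mul_sum]
  have hN2i : Integrable (fun ω => N ω ^ 2) P := by
    rw [hN2]
    exact integrable_finsetSum _ fun i _ => integrable_finsetSum _ fun j _ => hprod i j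
  have eN : ∫ ω, N ω ∂P = m := by
    rw [hN, integral_finsetSum _ hi, hm]
    rw [Finset.sum_congr rfl (g := fun _ => p)]
    · simp
    · intro j hj
      rw [integral_indicator (hE j), ← h1 j hj]
      simp
  have eN2 : ∫ ω, N ω ^ 2 ∂P ≤ m + m ^ 2 * (1 + δ) := by
    rw [hN2, integral_finsetSum _ fun i _ => integrable_finsetSum _ fun j _ => hprod i j]
    have : ∀ i ∈ s, ∫ ω, ∑ j ∈ s, (E i).indicator (fun _ => (1 : ℝ)) ω *
        (E j).indicator (fun _ => (1 : ℝ)) ω ∂P ≤ p + s.card * (p ^ 2 * (1 + δ)) := by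
      intro i his
      rw [integral_finsetSum _ fun j _ => hprod i j]
      have hb : ∀ j ∈ s, ∫ ω, (E i).indicator (fun _ => (1 : ℝ)) ω *
        (E j).indicator (fun _ => (1 : ℝ)) ω ∂P ≤ (if i = j then p else 0) +
          p ^ 2 * (1 + δ) := by
        intro j hjs
        rw [hij, integral_indicator ((hE i).inter (hE j))]
        have e : ∫ x in E i ∩ E j, (1 : ℝ) ∂P = P.real (E i ∩ E j) := by simp
        rw [e]
        split_ifs with h
        · subst h
          rw [Set.inter_self, h1 i his]
          have : 0 ≤ p ^ 2 * (1 + δ) := by positivity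
          linarith
        · rw [zero_add]
          exact h2 i his j hjs h
      refine (Finset.sum_le_sum hb).trans ?_
      rw [Finset.sum_add_distrib]
      simp [his]
    refine (Finset.sum_le_sum this).trans ?_
    rw [Finset.sum_const, nsmul_eq_mul, hm]
    apply le_of_eq
    ring
  have hdev : ∫ ω, (N ω - m) ^ 2 ∂P ≤ m + m ^ 2 * δ := by
    have e : (fun ω => (N ω - m) ^ 2) = fun ω => (N ω ^ 2 - (2 * m) * N ω) + m ^ 2 := by
      ext ω; ring
    rw [e, integral_add (show Integrable (fun ω => N ω ^ 2 - (2 * m) * N ω) P from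
      hN2i.sub (hNi.const_mul _)) (integrable_const _),
      integral_sub hN2i (hNi.const_mul _), integral_const_mul, eN]
    simp only [integral_const, probReal_univ, smul_eq_mul, one_mul]
    nlinarith
  have hdevi : Integrable (fun ω => (N ω - m) ^ 2) P := by
    have e : (fun ω => (N ω - m) ^ 2) = fun ω => (N ω ^ 2 - (2 * m) * N ω) + m ^ 2 := by
      ext ω; ring
    rw [e]
    exact (hN2i.sub (hNi.const_mul _)).add (integrable_const _)
  have hmk := mul_meas_ge_le_integral_of_nonneg (μ := P) (f := fun ω => (N ω - m) ^ 2)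
    (Eventually.of_forall fun ω => sq_nonneg _) hdevi ((η * m) ^ 2)
  have hsub : P.real {ω | N ω ≤ (1 - η) * m} ≤ P.real {ω | (η * m) ^ 2 ≤ (N ω - m) ^ 2} := by
    apply measureReal_mono _ (measure_ne_top _ _)
    intro ω hω
    simp only [Set.mem_ofPred_eq] at hω ⊢
    have : η * m ≤ m - N ω := by linarith
    have h0 : 0 < η * m := by positivity
    nlinarith
  refine hsub.trans ?_
  have hpos : 0 < (η * m) ^ 2 := by positivity
  have : P.real {ω | (η * m) ^ 2 ≤ (N ω - m) ^ 2} ≤ (m + m ^ 2 * δ) / (η * m) ^ 2 := by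
    rw [le_div_iff₀ hpos, mul_comm]
    exact hmk.trans hdev
  refine this.trans (le_of_eq ?_)
  field_simp

instance unif01_prob : IsProbabilityMeasure unif01 := ⟨by simp [unif01]⟩

lemma unif01_Iic (x : ℝ) (h0 : 0 ≤ x) (h1 : x ≤ 1) : unif01.real (Set.Iic x) = x := by
  rw [unif01, measureReal_def, Measure.restrict_apply measurableSet_Iic, Set.inter_comm,
    Set.Ioc_inter_Iic, min_eq_right h1, Real.volume_Ioc, sub_zero, ENNReal.toReal_ofReal h0]

lemma unif01_gap (y : ℝ) (h0 : 0 ≤ y) (h1 : 2 * y ≤ 1) :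
    unif01.real (Set.Ioc y (2 * y))ᶜ = 1 - y := by
  rw [measureReal_compl measurableSet_Ioc, probReal_univ]
  congr 1
  rw [unif01, measureReal_def, Measure.restrict_apply measurableSet_Ioc,
    Set.inter_eq_left.2 (Set.Ioc_subset_Ioc h0 h1), Real.volume_Ioc,
    ENNReal.toReal_ofReal (by linarith)]
  ring

/-- The product of uniform measures. -/
abbrev unifPi (ι : Type*) [Fintype ι] : Measure (ι → ℝ) := Measure.pi fun _ : ι => unif01

/-- Measure of a box all of whose nontrivial sides are indexed by a finset. -/
lemma unifPi_box {ι : Type*} [Fintype ι] [DecidableEq ι] (D : Finset ι) (A : ι → Set ℝ) :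
    (unifPi ι).real {X | ∀ d ∈ D, X d ∈ A d} = ∏ d ∈ D, unif01.real (A d) := by
  have : {X : ι → ℝ | ∀ d ∈ D, X d ∈ A d} =
      Set.pi Set.univ (fun i => if i ∈ D then A i else Set.univ) := by
    ext X
    simp only [Set.mem_ofPred_eq, Set.mem_pi, Set.mem_univ, true_imp_iff]
    refine forall_congr' fun i => ?_
    by_cases h : i ∈ D <;> simp [h]
  rw [this, measureReal_def, Measure.pi_pi, ENNReal.toReal_prod]
  rw [← Finset.prod_subset (Finset.subset_univ D)]
  · refine Finset.prod_congr rfl fun i hi => ?_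
    simp [hi, measureReal_def]
  · intro i _ hi
    simp [hi]

lemma unifPi_perm {ι : Type*} [Fintype ι] (e : Equiv.Perm ι) :
    MeasurePreserving (fun (X : ι → ℝ) i => X (e i)) (unifPi ι) (unifPi ι) where
  measurable := by fun_prop
  map_eq := by
    refine (Measure.pi_eq fun s hs => ?_).symm
    rw [Measure.map_apply (by fun_prop) (MeasurableSet.univ_pi hs)]
    have : (fun (X : ι → ℝ) i => X (e i)) ⁻¹' Set.pi Set.univ s =
        Set.pi Set.univ fun i => s (e.symm i) := by
      ext X
      simp only [Set.mem_preimage, Set.mem_pi, Set.mem_univ, true_imp_iff]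
      constructor
      · intro h i; simpa using h (e.symm i)
      · intro h i; simpa using h (e i)
    rw [this, Measure.pi_pi]
    exact Equiv.prod_comp e.symm (fun i => unif01 (s i))

/-- the chain event: increasing labels along `c`, all at most `y`, no label of `D` in the gap -/
def chainEv {ι : Type*} {k : ℕ} (y : ℝ) (c : Fin k → ι) (D : Finset ι) : Set (ι → ℝ) :=
  {X | StrictMono (fun j => X (c j)) ∧ (∀ j, X (c j) ≤ y) ∧ ∀ d ∈ D, X d ∉ Set.Ioc y (2 * y)}

lemma chainEv_meas {ι : Type*} {k : ℕ} (y : ℝ) (c : Fin k → ι) (D : Finset ι) :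
    MeasurableSet (chainEv y c D) := by
  unfold chainEv StrictMono
  simp only [measurableSet_setOfPred]
  refine Measurable.and ?_ (Measurable.and ?_ ?_)
  · refine Measurable.forall fun i => Measurable.forall fun j => ?_
    by_cases h : i < j
    · simp only [h, true_imp_iff]
      exact measurableSet_setOfPred.1
        (measurableSet_lt (measurable_pi_apply (c i)) (measurable_pi_apply (c j)))
    · simp [h]
  · refine Measurable.forall fun j => ?_
    exact measurableSet_setOfPred.1 (measurableSet_le (measurable_pi_apply (c j)) measurable_const)
  · have : MeasurableSet (⋂ d ∈ D, {X : ι → ℝ | X d ∉ Set.Ioc y (2 * y)}) := by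
      refine Finset.measurableSet_biInter D fun d _ => ?_
      exact (measurable_pi_apply d) measurableSet_Ioc.compl
    rw [← measurableSet_setOfPred]
    convert this using 1
    ext X; simp

lemma chainEv_le {ι : Type*} [Fintype ι] {k : ℕ} (y : ℝ) (h0 : 0 ≤ y) (h1 : 2 * y ≤ 1)
    (c : Fin k → ι) (hc : Function.Injective c) (D : Finset ι) (hD : ∀ j, c j ∉ D) :
    (unifPi ι).real (chainEv y c D) ≤ y ^ k / k.factorial * (1 - y) ^ D.card := by
  classical
  let σ' : Equiv.Perm (Fin k) → Equiv.Perm ι := fun σ => σ.viaEmbedding ⟨c, hc⟩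
  have hσc : ∀ σ j, σ' σ (c j) = c (σ j) := fun σ j =>
    Equiv.Perm.viaEmbedding_apply σ ⟨c, hc⟩ j
  have hσD : ∀ σ, ∀ d ∈ D, σ' σ d = d := by
    intro σ d hd
    refine Equiv.Perm.viaEmbedding_apply_of_notMem σ ⟨c, hc⟩ d ?_
    rintro ⟨j, rfl⟩
    exact hD j hd
  let F : Equiv.Perm (Fin k) → Set (ι → ℝ) := fun σ =>
    (fun (X : ι → ℝ) i => X (σ' σ i)) ⁻¹' chainEv y c D
  have hF : ∀ σ, (unifPi ι).real (F σ) = (unifPi ι).real (chainEv y c D) := by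
    intro σ
    rw [measureReal_def, measureReal_def,
      (unifPi_perm (σ' σ)).measure_preimage (chainEv_meas y c D).nullMeasurableSet]
  have hFm : ∀ σ, MeasurableSet (F σ) := fun σ =>
    (unifPi_perm (σ' σ)).measurable (chainEv_meas y c D)
  have hFd : Pairwise (Function.onFun Disjoint F) := by
    intro σ τ hne
    rw [Function.onFun, Set.disjoint_left]
    rintro X ⟨h, _⟩ ⟨h', _⟩
    simp only [hσc] at h h'
    apply hne
    have hinj : Function.Injective fun j => X (c j) := by
      intro a b hab
      have := h.injective (a₁ := σ.symm a) (a₂ := σ.symm b) (by simpa using hab)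
      exact σ.symm.injective this
    have hr : (fun j => X (c (σ j))) = (fun j => X (c (τ j))) := by
      have h1 := Finset.orderEmbOfFin_unique (s := Finset.univ.image fun j => X (c j))
        (k := k) (by rw [Finset.card_image_of_injective _ hinj]; simp)
        (f := fun j => X (c (σ j))) (fun j => by simp) h
      have h2 := Finset.orderEmbOfFin_unique (s := Finset.univ.image fun j => X (c j))
        (k := k) (by rw [Finset.card_image_of_injective _ hinj]; simp)
        (f := fun j => X (c (τ j))) (fun j => by simp) h'
      rw [h1, h2]
    ext j
    exact congrArg _ (hinj (congrFun hr j))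
  let C : Finset ι := Finset.univ.image c
  have hCD : Disjoint C D := by
    rw [Finset.disjoint_left]
    intro x hx
    simp only [C, Finset.mem_image, Finset.mem_univ, true_and] at hx
    obtain ⟨j, rfl⟩ := hx
    exact hD j
  let A : ι → Set ℝ := fun i => if i ∈ C then Set.Iic y else (Set.Ioc y (2 * y))ᶜ
  have hsub : (⋃ σ, F σ) ⊆ {X | ∀ d ∈ C ∪ D, X d ∈ A d} := by
    intro X hX
    obtain ⟨σ, h, h', h''⟩ := Set.mem_iUnion.1 hX
    simp only [hσc] at h h'
    intro d hd
    by_cases hdC : d ∈ C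
    · simp only [A, hdC, if_true]
      simp only [C, Finset.mem_image, Finset.mem_univ, true_and] at hdC
      obtain ⟨j, rfl⟩ := hdC
      simpa using h' (σ.symm j)
    · have hdD : d ∈ D := (Finset.mem_union.1 hd).resolve_left hdC
      simp only [A, hdC, if_false]
      have := h'' d hdD
      simp only [hσD σ d hdD] at this
      exact this
  have hbox : (unifPi ι).real {X | ∀ d ∈ C ∪ D, X d ∈ A d} = y ^ k * (1 - y) ^ D.card := by
    rw [unifPi_box, Finset.prod_union hCD]
    congr 1
    · rw [Finset.prod_congr rfl (g := fun _ => y)]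
      · rw [Finset.prod_const, Finset.card_image_of_injective _ hc]; simp
      · intro d hd
        simp only [A, hd, if_true]
        exact unif01_Iic y h0 (by linarith)
    · rw [Finset.prod_congr rfl (g := fun _ => 1 - y)]
      · rw [Finset.prod_const]
      · intro d hd
        have : d ∉ C := fun h => Finset.disjoint_left.1 hCD h hd
        simp only [A, this, if_false]
        exact unif01_gap y h0 h1
  have hsum : (unifPi ι).real (⋃ σ, F σ) = k.factorial * (unifPi ι).real (chainEv y c D) := by
    rw [measureReal_iUnion_fintype hFd hFm]
    simp [hF, Fintype.card_perm]
  have hle := measureReal_mono hsub (measure_ne_top (unifPi ι) _)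
  rw [hsum, hbox] at hle
  have hk : (0 : ℝ) < k.factorial := by exact_mod_cast k.factorial_pos
  rw [div_mul_eq_mul_div, le_div_iff₀ hk]
  linarith

/-! ### Transfer to a product of uniform measures -/

/-- The sample with exactly `r` labels per edge determined by a family of real numbers. -/
def mkSample {V : Type*} {r : ℕ} (X : Sym2 V × Fin r → ℝ) : Sym2 V → LabelSpace :=
  fun e => ⟨r, fun i => X (e, i)⟩

lemma edgeMeasure_dirac (r : ℕ) :
    edgeMeasure unif01 (Measure.dirac r) =
      (Measure.pi fun _ : Fin r => unif01).map (Sigma.mk r) := by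
  unfold edgeMeasure
  ext s hs
  rw [Measure.sum_apply _ hs, tsum_eq_single r]
  · simp
  · intro k hk
    have : (Measure.dirac r : Measure ℕ) {k} = 0 := by
      rw [Measure.dirac_apply]
      simp [Ne.symm hk]
    simp [this]

/-- The inclusion of `r`-tuples into the label space. -/
abbrev labMk (r : ℕ) : (Fin r → ℝ) → LabelSpace := fun f => ⟨r, f⟩

lemma measurable_labMk (r : ℕ) : Measurable (labMk r) := by
  intro s hs
  exact (MeasurableSpace.measurableSet_iInf.1 hs) r

lemma measurable_of_labMk {β : Type*} [MeasurableSpace β] {f : LabelSpace → β}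
    (h : ∀ k, Measurable (f ∘ labMk k)) : Measurable f := by
  intro s hs
  exact MeasurableSpace.measurableSet_iInf.2 fun k => h k hs

lemma mkSample_measurable {V : Type*} {r : ℕ} :
    Measurable (mkSample : (Sym2 V × Fin r → ℝ) → Sym2 V → LabelSpace) := by
  refine measurable_pi_lambda _ fun e => ?_
  refine (measurable_labMk r).comp ?_
  fun_prop

lemma contModel_eq (V : Type*) [Fintype V] [DecidableEq V] (r : ℕ) :
    contModel V (Measure.dirac r) = (unifPi (Sym2 V × Fin r)).map mkSample := by
  unfold contModel model
  rw [edgeMeasure_dirac]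
  change Measure.pi (fun _ : Sym2 V => (Measure.pi fun _ : Fin r => unif01).map (labMk r)) = _
  have : ∀ _ : Sym2 V, SigmaFinite ((Measure.pi fun _ : Fin r => unif01).map
      (labMk r)) := fun _ => by
    have := Measure.isProbabilityMeasure_map (μ := Measure.pi fun _ : Fin r => unif01)
      (measurable_labMk r).aemeasurable
    infer_instance
  rw [← Measure.pi_map_pi (μ := fun _ : Sym2 V => Measure.pi fun _ : Fin r => unif01)
    (f := fun _ => (labMk r))
    (fun _ => (measurable_labMk r).aemeasurable)]
  have hc := Measure.infinitePi_map_curry (ι := Sym2 V) (κ := Fin r) (X := ℝ)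
    (μ := fun _ _ => unif01)
  simp only [Measure.infinitePi_eq_pi] at hc
  rw [← hc, Measure.map_map _ (MeasurableEquiv.measurable _)]
  · rfl
  · refine measurable_pi_lambda _ fun e => ?_
    exact (measurable_labMk r).comp (measurable_pi_apply e)

lemma mkSample_embedding {V : Type*} [Fintype V] {r : ℕ} :
    MeasurableEmbedding (mkSample : (Sym2 V × Fin r → ℝ) → Sym2 V → LabelSpace) := by
  let g1 : Fin r → LabelSpace → ℝ := fun i l => if h : (i : ℕ) < l.1 then l.2 ⟨i, h⟩ else 0
  have hg1 : ∀ i, Measurable (g1 i) := by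
    intro i
    refine measurable_of_labMk fun k => ?_
    by_cases h : (i : ℕ) < k
    · simp only [g1, Function.comp_def, h, dif_pos]
      exact (measurable_pi_apply (⟨i, h⟩ : Fin k) :
        Measurable fun x : Fin k → ℝ => x ⟨i, h⟩)
    · simp only [g1, Function.comp_def, h, dif_neg, not_false_eq_true]
      fun_prop
  have hfst : Measurable (fun l : LabelSpace => l.1) :=
    measurable_of_labMk fun k => by simp only [Function.comp_def]; fun_prop
  refine MeasurableEmbedding.of_measurable_inverse
    (g := fun ω (p : Sym2 V × Fin r) => g1 p.2 (ω p.1)) mkSample_measurable ?_ ?_ ?_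
  · have : range (mkSample : (Sym2 V × Fin r → ℝ) → Sym2 V → LabelSpace) =
        ⋂ e, {ω : Sym2 V → LabelSpace | (ω e).1 = r} := by
      ext ω
      simp only [Set.mem_range, Set.mem_iInter, Set.mem_ofPred_eq]
      constructor
      · rintro ⟨X, rfl⟩ e
        rfl
      · intro h
        have : ∀ e, ∃ f : Fin r → ℝ, ω e = ⟨r, f⟩ := by
          intro e
          have he := h e
          generalize ω e = l at he
          obtain ⟨k, f⟩ := l
          simp only at he
          subst he
          exact ⟨f, rfl⟩
        choose F hF using this
        exact ⟨fun p => F p.1 p.2, by ext1 e; rw [hF]; rfl⟩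
    rw [this]
    refine MeasurableSet.iInter fun e => ?_
    exact (hfst.comp (measurable_pi_apply e)) (measurableSet_singleton r)
  · refine measurable_pi_lambda _ fun p => ?_
    exact (hg1 p.2).comp (measurable_pi_apply p.1)
  · intro X
    ext p
    simp [g1, mkSample]

lemma contModel_apply (V : Type*) [Fintype V] [DecidableEq V] (r : ℕ)
    (A : Set (Sym2 V → LabelSpace)) :
    contModel V (Measure.dirac r) A = unifPi (Sym2 V × Fin r) (mkSample ⁻¹' A) := by
  rw [contModel_eq, mkSample_embedding.map_apply]

/-! ### Deterministic part -/

section Det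

variable {V : Type*} [Fintype V] [DecidableEq V] {r : ℕ}

/-- the label coordinates of the non-loop edges at `w` -/
def starD (r : ℕ) (w : V) : Finset (Sym2 V × Fin r) :=
  ((Finset.univ.erase w) ×ˢ (Finset.univ : Finset (Fin r))).image fun p => (s(w, p.1), p.2)

lemma mem_starD {w : V} {e : Sym2 V} {i : Fin r} :
    (e, i) ∈ starD r w ↔ ∃ u, u ≠ w ∧ e = s(w, u) := by
  simp only [starD, Finset.mem_image, Finset.mem_product, Finset.mem_erase, Finset.mem_univ,
    and_true, Prod.exists, Prod.mk.injEq]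
  constructor
  · rintro ⟨u, j, hu, rfl, rfl⟩
    exact ⟨u, hu, rfl⟩
  · rintro ⟨u, hu, rfl⟩
    exact ⟨u, i, hu, rfl, rfl⟩

lemma card_starD (w : V) : (starD r w).card = r * (Fintype.card V - 1) := by
  rw [starD, Finset.card_image_of_injective]
  · simp [mul_comm]
  · rintro ⟨u, i⟩ ⟨u', i'⟩ h
    simp only [Prod.mk.injEq, Sym2.congr_right] at h
    exact Prod.ext h.1 h.2

lemma card_starD_inter {w w' : V} (h : w ≠ w') : (starD r w ∩ starD r w').card ≤ r := by
  have : starD r w ∩ starD r w' ⊆ (Finset.univ : Finset (Fin r)).image fun i => (s(w, w'), i) := by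
    rintro ⟨e, i⟩ hp
    rw [Finset.mem_inter, mem_starD, mem_starD] at hp
    obtain ⟨⟨u, hu, rfl⟩, u', hu', h2⟩ := hp
    rw [Sym2.eq_iff] at h2
    rcases h2 with ⟨rfl, rfl⟩ | ⟨rfl, rfl⟩
    · exact absurd rfl h
    · simp
  refine (Finset.card_le_card this).trans (Finset.card_image_le.trans ?_)
  simp

/-- the coordinates used by a path -/
def edgeOf {k : ℕ} (f : Fin (k + 1) → V) (l : Fin k → Fin r) : Fin k → Sym2 V × Fin r :=
  fun j => (s(f j.castSucc, f j.succ), l j)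

lemma edgeOf_injective {k : ℕ} {f : Fin (k + 1) → V} (hf : Function.Injective f)
    (l : Fin k → Fin r) : Function.Injective (edgeOf f l) := by
  intro a b h
  have h1 := congrArg Prod.fst h
  simp only [edgeOf, Sym2.eq_iff] at h1
  rcases h1 with ⟨h1, _⟩ | ⟨h1, h2⟩
  · exact Fin.castSucc_injective _ (hf h1)
  · have h1 := congrArg Fin.val (hf h1)
    have h2 := congrArg Fin.val (hf h2)
    simp at h1 h2
    omega

/-- `w` has no label in the gap `(y, 2y]` -/
def isoEv (r : ℕ) (y : ℝ) (w : V) : Set (Sym2 V × Fin r → ℝ) :=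
  {X | ∀ d ∈ starD r w, X d ∈ (Set.Ioc y (2 * y))ᶜ}

/-- the event that a given path into `w` is increasing and early, and `w` is isolated later -/
def pathEv (y : ℝ) (w : V) (k : ℕ) (g : Fin k → V) (l : Fin k → Fin r) :
    Set (Sym2 V × Fin r → ℝ) :=
  {X | Function.Injective (Fin.snoc (α := fun _ => V) g w) ∧
    X ∈ chainEv y (edgeOf (Fin.snoc (α := fun _ => V) g w) l) (starD r w)}

lemma pathEv_meas (y : ℝ) (w : V) (k : ℕ) (g : Fin k → V) (l : Fin k → Fin r) :
    MeasurableSet (pathEv y w k g l) := by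
  unfold pathEv
  by_cases h : Function.Injective (Fin.snoc (α := fun _ => V) g w)
  · simp only [h, true_and]
    exact chainEv_meas _ _ _
  · simp [h]

lemma pathEv_le (y : ℝ) (h0 : 0 ≤ y) (h1 : 2 * y ≤ 1) (w : V) (k : ℕ) (g : Fin k → V)
    (l : Fin k → Fin r) :
    (unifPi (Sym2 V × Fin r)).real (pathEv y w k g l) ≤
      y ^ k / k.factorial * ((1 - y) ^ (r * (Fintype.card V - 1)) / (1 - y)) := by
  have hy : 0 < 1 - y := by linarith
  by_cases h : Function.Injective (Fin.snoc (α := fun _ => V) g w)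
  · set f : Fin (k + 1) → V := Fin.snoc (α := fun _ => V) g w with hf
    set c := edgeOf f l with hc
    have hlast : f (Fin.last k) = w := by simp [hf]
    set D := starD r w \ Finset.univ.image c with hD
    have hsub : pathEv y w k g l ⊆ chainEv y c D := by
      rintro X ⟨_, h1, h2, h3⟩
      exact ⟨h1, h2, fun d hd => h3 d (Finset.mem_sdiff.1 hd).1⟩
    have hcD : ∀ j, c j ∉ D := by
      intro j hj
      exact (Finset.mem_sdiff.1 hj).2 (Finset.mem_image_of_mem _ (Finset.mem_univ _))
    have hint : (starD r w ∩ Finset.univ.image c).card ≤ 1 := by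
      have key : ∀ j, c j ∈ starD r w → (j : ℕ) + 1 = k := by
        intro j hj
        simp only [hc, edgeOf] at hj
        rw [mem_starD] at hj
        obtain ⟨u, hu, he⟩ := hj
        rw [Sym2.eq_iff] at he
        rcases he with ⟨he, _⟩ | ⟨_, he⟩
        · rw [← hlast] at he
          have := congrArg Fin.val (h he)
          simp at this
          omega
        · rw [← hlast] at he
          have := congrArg Fin.val (h he)
          simpa using this
      rw [Finset.card_le_one]
      intro a ha b hb
      rw [Finset.mem_inter] at ha hb
      obtain ⟨j, _, rfl⟩ := Finset.mem_image.1 ha.2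
      obtain ⟨j', _, rfl⟩ := Finset.mem_image.1 hb.2
      have h1 := key j ha.1
      have h2 := key j' hb.1
      congr 1
      ext
      omega
    have hcard : r * (Fintype.card V - 1) ≤ D.card + 1 := by
      have := Finset.card_sdiff_add_card_inter (starD r w) (Finset.univ.image c)
      rw [← hD, card_starD] at this
      omega
    refine (measureReal_mono hsub (measure_ne_top _ _)).trans ?_
    refine (chainEv_le y h0 h1 c (edgeOf_injective h l) D hcD).trans ?_
    refine mul_le_mul_of_nonneg_left ?_ (by positivity)
    rw [le_div_iff₀ hy, ← pow_succ]
    exact pow_le_pow_of_le_one hy.le (by linarith) hcard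
  · have : pathEv y w k g l = ∅ := by
      ext X; simp [pathEv, h]
    rw [this]
    simp only [measureReal_empty]
    positivity

/-- the early in-ball of `w` -/
def inB (y : ℝ) (X : Sym2 V × Fin r → ℝ) (w : V) : Set V :=
  {v | ∃ (k : ℕ) (g : Fin k → V) (l : Fin k → Fin r), X ∈ pathEv y w k g l ∧
    (Fin.snoc (α := fun _ => V) g w : Fin (k + 1) → V) 0 = v}

/-- index type of the paths into a given vertex -/
abbrev PIdx (V : Type*) [Fintype V] (r : ℕ) :=
  Σ k : Fin (Fintype.card V), (Fin k → V) × (Fin k → Fin r)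

lemma inB_card (y : ℝ) (X : Sym2 V × Fin r → ℝ) (w : V) :
    ((inB y X w).ncard : ℝ) ≤
      ∑ j : PIdx V r, (pathEv y w j.1 j.2.1 j.2.2).indicator (fun _ => (1 : ℝ)) X := by
  classical
  let s : Finset (PIdx V r) := Finset.univ.filter fun j => X ∈ pathEv y w j.1 j.2.1 j.2.2
  have h1 : ∑ j : PIdx V r, (pathEv y w j.1 j.2.1 j.2.2).indicator (fun _ => (1 : ℝ)) X
      = s.card := by
    simp only [Set.indicator_apply, s, Finset.sum_boole]
  rw [h1]
  have h2 : inB y X w ⊆ (s.image fun j =>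
      (Fin.snoc (α := fun _ => V) j.2.1 w : Fin (j.1 + 1) → V) 0 : Finset V) := by
    rintro v ⟨k, g, l, hX, rfl⟩
    have hk : k < Fintype.card V := by
      have := Fintype.card_le_of_injective _ hX.1
      simpa using this
    rw [Finset.mem_coe, Finset.mem_image]
    exact ⟨⟨⟨k, hk⟩, g, l⟩, by simpa [s] using hX, rfl⟩
  have h3 := Set.ncard_le_ncard h2 (Finset.finite_toSet _)
  rw [Set.ncard_coe_finset] at h3
  exact_mod_cast h3.trans Finset.card_image_le

/-- increasing walk with label indices -/
def IncWalk (X : Sym2 V × Fin r → ℝ) (x : ℝ) (v w : V) (k : ℕ) (f : ℕ → V) (l : ℕ → Fin r) :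
    Prop :=
  f 0 = v ∧ f k = w ∧ (∀ i < k, X (s(f i, f (i + 1)), l i) ≤ x) ∧
    ∀ i j, i < j → j < k → X (s(f i, f (i + 1)), l i) < X (s(f j, f (j + 1)), l j)


lemma IncWalk.cut {X : Sym2 V × Fin r → ℝ} {x : ℝ} {v w : V} {k : ℕ} {f : ℕ → V}
    {l : ℕ → Fin r} (h : IncWalk X x v w k f l) {a b : ℕ} (hab : a < b) (hb : b ≤ k)
    (hf : f a = f b) : ∃ f' l', IncWalk X x v w (k - (b - a)) f' l' := by
  obtain ⟨h0, hk, hx, hm⟩ := h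
  let φ : ℕ → ℕ := fun i => if i < a then i else i + (b - a)
  have hφ : ∀ i, (fun i => if i ≤ a then f i else f (i + (b - a))) i = f (φ i) := by
    intro i
    simp only [φ]
    by_cases h1 : i < a
    · simp [h1, h1.le]
    · by_cases h2 : i = a
      · subst h2
        simp only [le_refl, if_true, lt_irrefl, if_false]
        rw [hf]; congr 1; omega
      · have h3 : ¬ i ≤ a := by omega
        simp [h1, h3]
  have hφ1 : ∀ i, (fun i => if i ≤ a then f i else f (i + (b - a))) (i + 1) = f (φ i + 1) := by
    intro i
    simp only [φ]
    by_cases h1 : i < a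
    · have : i + 1 ≤ a := h1
      simp [h1, this]
    · have h3 : ¬ i + 1 ≤ a := by omega
      simp only [h1, h3, if_false]
      congr 1; omega
  refine ⟨fun i => if i ≤ a then f i else f (i + (b - a)), fun i => l (φ i), ?_, ?_, ?_, ?_⟩
  · simpa using h0
  · rw [hφ, ← hk]
    congr 1
    simp only [φ]
    split_ifs <;> omega
  · intro i hi
    rw [hφ, hφ1]
    apply hx
    simp only [φ]
    split_ifs <;> omega
  · intro i j hij hj
    rw [hφ, hφ1, hφ, hφ1]
    apply hm
    · simp only [φ]
      split_ifs <;> omega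
    · simp only [φ]
      split_ifs <;> omega

lemma inB_of_walk {X : Sym2 V × Fin r → ℝ} {y : ℝ} {v w : V} (hiso : X ∈ isoEv r y w)
    (h : ∃ k f l, IncWalk X (2 * y) v w k f l) : v ∈ inB y X w := by
  classical
  obtain ⟨f, l, hw⟩ := Nat.find_spec h
  have hmin := fun m (hm : m < Nat.find h) => Nat.find_min h hm
  generalize Nat.find h = k at hw hmin
  have hinj : ∀ a b, a ≤ k → b ≤ k → f a = f b → a = b := by
    have aux : ∀ a b, a < b → b ≤ k → f a ≠ f b := by
      intro a b hab hb hf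
      obtain ⟨f', l', h'⟩ := hw.cut hab hb hf
      exact hmin (k - (b - a)) (by omega) ⟨f', l', h'⟩
    intro a b ha hb hf
    rcases lt_trichotomy a b with h | h | h
    · exact absurd hf (aux a b h hb)
    · exact h
    · exact absurd hf.symm (aux b a h ha)
  obtain ⟨h0, hk, hx, hm⟩ := hw
  have hsn : (Fin.snoc (α := fun _ => V) (fun j : Fin k => f j) w : Fin (k + 1) → V) =
      fun j : Fin (k + 1) => f (j : ℕ) := by
    ext1 j
    refine Fin.lastCases ?_ (fun i => ?_) j
    · simp [hk]
    · simp
  have hle : ∀ i < k, X (s(f i, f (i + 1)), l i) ≤ y := by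
    have hl : ∀ i, i + 1 = k → X (s(f i, f (i + 1)), l i) ≤ y := by
      intro i hi
      have h1 : (s(f i, f (i + 1)), l i) ∈ starD r w := by
        rw [mem_starD]
        refine ⟨f i, ?_, ?_⟩
        · intro h'
          rw [← hk] at h'
          have := hinj i k (by omega) le_rfl h'
          omega
        · rw [hi, hk, Sym2.eq_swap]
      have h2 := hiso _ h1
      have h3 := hx i (by omega)
      by_contra h4
      exact h2 ⟨not_le.1 h4, h3⟩
    intro i hi
    by_cases h : i + 1 = k
    · exact hl i h
    · have := hm i (k - 1) (by omega) (by omega)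
      exact this.le.trans (hl (k - 1) (by omega))
  refine ⟨k, fun j => f j, fun j => l j, ⟨?_, ?_, ?_, ?_⟩, ?_⟩
  · rw [hsn]
    intro a b hab
    exact Fin.ext (hinj a b (by omega) (by omega) hab)
  · rw [hsn]
    intro a b hab
    simp only [edgeOf]
    exact hm a b hab b.2
  · rw [hsn]
    intro j
    exact hle j j.2
  · exact hiso
  · rw [hsn]; simpa using h0

lemma rank_mkSample (X : Sym2 V × Fin r → ℝ) (x : ℝ) :
    (rank (mkSample X) x : ℝ) =
      ∑ p ∈ (Finset.univ.filter fun e : Sym2 V => ¬ e.IsDiag) ×ˢ (Finset.univ : Finset (Fin r)),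
        ({X : Sym2 V × Fin r → ℝ | X p ≤ x}).indicator (fun _ => (1 : ℝ)) X := by
  classical
  rw [Finset.sum_product, rank, Nat.cast_sum]
  refine Finset.sum_congr rfl fun e _ => ?_
  simp only [Set.indicator_apply, Set.mem_ofPred_eq, Finset.sum_boole]
  congr 1
  rw [Nat.card_eq_fintype_card, Fintype.card_subtype]
  rfl

lemma rank_mono (ω : Sym2 V → LabelSpace) {x x' : ℝ} (h : x ≤ x') : rank ω x ≤ rank ω x' := by
  refine Finset.sum_le_sum fun e _ => ?_
  exact Nat.card_le_card_of_injective (fun i => ⟨i.1, i.2.trans h⟩)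
    fun a b hab => Subtype.ext (by simpa using hab)

lemma walk_of_reach {X : Sym2 V × Fin r → ℝ} {x t : ℝ} (ht : t < rank (mkSample X) x)
    {S : Set V} {v : V} (hr : 0 < r) (h : ReachBy (orderDisc (mkSample X)) S t v) :
    ∃ u ∈ S, ∃ k f l, IncWalk X x u v k f l := by
  rcases h with h | ⟨k, f, ts, hk, h0, hv, hlab, hmono, hlast⟩
  · exact ⟨v, h, 0, fun _ => v, fun _ => ⟨0, hr⟩, rfl, rfl, by simp, by simp⟩
  · have : ∀ i, ∃ j : Fin r, i < k →
        (rank (mkSample X) (X (s(f i, f (i + 1)), j)) : ℝ) = ts i := by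
      intro i
      by_cases hi : i < k
      · have := hlab i hi
        simp only [orderDisc] at this
        split_ifs at this with hd
        · simp at this
        · obtain ⟨j, _, hj⟩ := Finset.mem_image.1 this
          exact ⟨j, fun _ => hj⟩
      · exact ⟨⟨0, hr⟩, fun h => absurd h hi⟩
    choose l hl using this
    refine ⟨f 0, h0, k, f, l, rfl, hv, ?_, ?_⟩
    · intro i hi
      by_contra hlt
      have h1 : (rank (mkSample X) x : ℝ) ≤ ts i := by
        rw [← hl i hi]
        exact_mod_cast rank_mono _ (not_le.1 hlt).le
      have h2 : ts i ≤ ts (k - 1) := by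
        rcases eq_or_lt_of_le (show i ≤ k - 1 by omega) with h | h
        · rw [h]
        · exact (hmono i (k - 1) h (by omega)).le
      linarith
    · intro i j hij hj
      by_contra hlt
      have h1 : ts j ≤ ts i := by
        rw [← hl i (hij.trans hj), ← hl j hj]
        exact_mod_cast rank_mono _ (not_lt.1 hlt)
      exact absurd (hmono i j hij hj) (not_lt.2 h1)

lemma double_ge {X : Sym2 V × Fin r → ℝ} {y T : ℝ} (hr : 0 < r)
    (hT : T ≤ rank (mkSample X) (2 * y)) {w₁ w₂ : V} (hw : w₁ ≠ w₂)
    (hi₁ : X ∈ isoEv r y w₁) (hi₂ : X ∈ isoEv r y w₂)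
    (hc₁ : 4 * (inB y X w₁).ncard ≤ Fintype.card V)
    (hc₂ : 4 * (inB y X w₂).ncard ≤ Fintype.card V) :
    ENNReal.ofReal T ≤ doubleAll (orderDisc (mkSample X)) := by
  classical
  set n := Fintype.card V with hn
  have hn2 : 2 ≤ n := by
    have := Finset.card_le_univ ({w₁, w₂} : Finset V)
    rw [Finset.card_pair hw] at this
    exact this
  let C : Finset V := (inB y X w₁).toFinset ∪ (inB y X w₂).toFinset
  have hC : 2 * C.card ≤ n := by
    have := Finset.card_union_le (inB y X w₁).toFinset (inB y X w₂).toFinset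
    rw [← Set.ncard_eq_toFinset_card', ← Set.ncard_eq_toFinset_card'] at this
    simp only [C]
    omega
  have hC' : n / 2 ≤ Cᶜ.card := by
    rw [Finset.card_compl]
    omega
  obtain ⟨S, hS, hSc⟩ := Finset.exists_subset_card_eq hC'
  refine le_iSup₂_of_le (S : Set V) ⟨?_, ?_⟩ ?_
  · rw [Finset.coe_nonempty, ← Finset.card_pos]
    omega
  · rw [Set.ncard_coe_finset]
    omega
  · refine le_iInf₂ fun t ht => ENNReal.ofReal_le_ofReal ?_
    by_contra hlt
    obtain ⟨_, ht⟩ := ht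
    have key : ∀ w, X ∈ isoEv r y w → (∀ v ∈ inB y X w, v ∈ C) →
        w ∉ ball (orderDisc (mkSample X)) (S : Set V) t := by
      intro w hiso hwC hmem
      obtain ⟨u, hu, hwalk⟩ := walk_of_reach (x := 2 * y) (by linarith [not_le.1 hlt]) hr hmem
      have := hwC u (inB_of_walk hiso hwalk)
      exact Finset.mem_compl.1 (hS hu) this
    have k1 := key w₁ hi₁ (fun v hv => by simp [C, hv])
    have k2 := key w₂ hi₂ (fun v hv => by simp [C, hv])
    have hsub : ball (orderDisc (mkSample X)) (S : Set V) t ⊆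
        (({w₁, w₂} : Finset V)ᶜ : Finset V) := by
      intro v hv
      simp only [Finset.coe_compl, Finset.coe_pair, Set.mem_compl_iff, Set.mem_insert_iff,
        Set.mem_singleton_iff, not_or]
      exact ⟨fun h => k1 (h ▸ hv), fun h => k2 (h ▸ hv)⟩
    have h3 := Set.ncard_le_ncard hsub (Finset.finite_toSet _)
    rw [Set.ncard_coe_finset, Finset.card_compl, Finset.card_pair hw] at h3
    rw [Set.ncard_coe_finset] at ht
    omega

end Det

/-! ### Probability bound for fixed `n` -/

lemma isoEv_meas {V : Type*} [Fintype V] [DecidableEq V] (r : ℕ) (y : ℝ) (w : V) :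
    MeasurableSet (isoEv r y w) := by
  have : isoEv r y w = ⋂ d ∈ starD r w, {X | X d ∈ (Set.Ioc y (2 * y))ᶜ} := by
    ext X; simp [isoEv]
  rw [this]
  refine Finset.measurableSet_biInter _ fun d _ => ?_
  exact (measurable_pi_apply d) measurableSet_Ioc.compl

lemma sum_path_le (n r : ℕ) (y : ℝ) (h0 : 0 ≤ y) (h1 : 2 * y ≤ 1) :
    ∑ j : Fin n × PIdx (Fin n) r, (unifPi (Sym2 (Fin n) × Fin r)).real
      (pathEv y j.1 j.2.1 j.2.2.1 j.2.2.2) ≤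
    n * Real.exp (r * n * y) * ((1 - y) ^ (r * (n - 1)) / (1 - y)) := by
  set Q := (1 - y) ^ (r * (n - 1)) / (1 - y) with hQ
  have hQ0 : 0 ≤ Q := by
    have : 0 < 1 - y := by linarith
    positivity
  have hb : ∀ j : Fin n × PIdx (Fin n) r, (unifPi (Sym2 (Fin n) × Fin r)).real
      (pathEv y j.1 j.2.1 j.2.2.1 j.2.2.2) ≤
      y ^ (j.2.1 : ℕ) / (j.2.1 : ℕ).factorial * Q := by
    intro j
    have := pathEv_le (r := r) y h0 h1 j.1 j.2.1 j.2.2.1 j.2.2.2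
    have e : Q = (1 - y) ^ (r * (Fintype.card (Fin n) - 1)) / (1 - y) := by
      rw [Fintype.card_fin]
    rw [e]
    exact this
  refine (Finset.sum_le_sum fun j _ => hb j).trans ?_
  rw [Fintype.sum_prod_type]
  simp only [Finset.sum_const, Finset.card_univ, Fintype.card_fin, nsmul_eq_mul]
  rw [Fintype.sum_sigma]
  simp only [Finset.sum_const, Finset.card_univ, nsmul_eq_mul, Fintype.card_prod,
    Fintype.card_fun, Fintype.card_fin]
  have h2 : ∀ k : Fin (Fintype.card (Fin n)), (((n ^ (k : ℕ) * r ^ (k : ℕ) : ℕ) : ℝ)) *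
      (y ^ (k : ℕ) / (k : ℕ).factorial * Q) =
      (r * n * y) ^ (k : ℕ) / (k : ℕ).factorial * Q := by
    intro k
    push_cast
    rw [mul_pow, mul_pow]
    ring
  rw [Finset.sum_congr rfl fun k _ => h2 k, ← Finset.sum_mul, mul_assoc (n : ℝ) (Real.exp _)]
  refine mul_le_mul_of_nonneg_left (mul_le_mul_of_nonneg_right ?_ hQ0) (Nat.cast_nonneg _)
  rw [Fin.sum_univ_eq_sum_range (fun k => ((r : ℝ) * n * y) ^ k / (k.factorial : ℝ))]
  exact Real.sum_le_exp_of_nonneg (by positivity) _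

lemma bad_bound (n r : ℕ) (hr : 0 < r) (hn : 2 ≤ n) (y : ℝ) (h0 : 0 < y) (h1 : 2 * y ≤ 1)
    (η T : ℝ) (hη : 0 < η)
    (hT : T ≤ (1 - η) * ((n.choose 2 * r : ℕ) * (2 * y)))
    (hq : 8 ≤ n * (1 - y) ^ (r * (n - 1))) :
    (unifPi (Sym2 (Fin n) × Fin r)).real
      {X | ¬ ENNReal.ofReal T ≤ doubleAll (orderDisc (mkSample X))} ≤
    (1 / ((n.choose 2 * r : ℕ) * (2 * y)) + 0) / η ^ 2 +
    (1 / (n * (1 - y) ^ (r * (n - 1))) + (((1 - y) ^ r)⁻¹ - 1)) / (1 / 2) ^ 2 +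
    16 * Real.exp (r * n * y) / (n * (1 - y)) := by
  classical
  set ν := unifPi (Sym2 (Fin n) × Fin r) with hν
  set q := (1 - y) ^ (r * (n - 1)) with hqd
  have hy : 0 < 1 - y := by linarith
  have hq0 : 0 < q := by positivity
  have hn0 : (0 : ℝ) < n := by positivity
  set s := (Finset.univ.filter fun e : Sym2 (Fin n) => ¬ e.IsDiag) ×ˢ
    (Finset.univ : Finset (Fin r)) with hs
  have hsc : s.card = n.choose 2 * r := by
    rw [hs, Finset.card_product, ← Fintype.card_subtype, Sym2.card_subtype_not_diag]
    simp
  set B1 : Set (Sym2 (Fin n) × Fin r → ℝ) := {X | ∑ p ∈ s,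
    ({X : Sym2 (Fin n) × Fin r → ℝ | X p ≤ 2 * y}).indicator (fun _ => (1 : ℝ)) X ≤
      (1 - η) * (s.card * (2 * y))} with hB1
  set B2 : Set (Sym2 (Fin n) × Fin r → ℝ) := {X | ∑ w ∈ (Finset.univ : Finset (Fin n)),
    (isoEv r y w).indicator (fun _ => (1 : ℝ)) X ≤
      (1 - 1 / 2) * ((Finset.univ : Finset (Fin n)).card * q)} with hB2
  set K : ℝ := n ^ 2 * q / 16 with hK
  set B3 : Set (Sym2 (Fin n) × Fin r → ℝ) := {X | K ≤ ∑ j : Fin n × PIdx (Fin n) r,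
    (pathEv y j.1 j.2.1 j.2.2.1 j.2.2.2).indicator (fun _ => (1 : ℝ)) X} with hB3
  have b1 : ν.real B1 ≤ (1 / ((n.choose 2 * r : ℕ) * (2 * y)) + 0) / η ^ 2 := by
    rw [← hsc]
    refine second_moment ν s (fun p => {X | X p ≤ 2 * y}) ?_ (2 * y) 0 η (by linarith) hη le_rfl
      ?_ ?_ ?_
    · intro p
      exact measurableSet_le (measurable_pi_apply p) measurable_const
    · rw [hsc]
      exact Nat.mul_pos (Nat.choose_pos hn) hr
    · intro p _
      have := unifPi_box {p} (fun _ => Set.Iic (2 * y))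
      simp only [Finset.mem_singleton, forall_eq, Finset.prod_singleton, Set.mem_Iic] at this
      rw [this, unif01_Iic _ (by linarith) h1]
    · intro p _ p' _ hne
      have := unifPi_box {p, p'} (fun _ => Set.Iic (2 * y))
      rw [Finset.prod_pair hne, unif01_Iic _ (by linarith) h1] at this
      simp only [Finset.mem_insert, Finset.mem_singleton, forall_eq_or_imp, forall_eq,
        Set.mem_Iic] at this
      have e : ({X | X p ≤ 2 * y} ∩ {X | X p' ≤ 2 * y} : Set (Sym2 (Fin n) × Fin r → ℝ)) =
          {X | X p ≤ 2 * y ∧ X p' ≤ 2 * y} := by ext; simp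
      rw [e, this]
      apply le_of_eq
      ring
  have hinv : 1 ≤ ((1 - y) ^ r)⁻¹ :=
    one_le_inv_iff₀.2 ⟨by positivity, pow_le_one₀ hy.le (by linarith)⟩
  have hbox : ∀ D : Finset (Sym2 (Fin n) × Fin r),
      ν.real {X | ∀ d ∈ D, X d ∈ (Set.Ioc y (2 * y))ᶜ} = (1 - y) ^ D.card := by
    intro D
    rw [hν, unifPi_box D (fun _ => (Set.Ioc y (2 * y))ᶜ), unif01_gap y h0.le h1,
      Finset.prod_const]
  have b2 : ν.real B2 ≤
      (1 / (n * q) + (((1 - y) ^ r)⁻¹ - 1)) / (1 / 2) ^ 2 := by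
    have := second_moment ν (Finset.univ : Finset (Fin n)) (fun w => isoEv r y w)
      (fun w => isoEv_meas r y w) q (((1 - y) ^ r)⁻¹ - 1) (1 / 2) hq0 (by norm_num)
      (by linarith) (by simp; omega) ?_ ?_
    · simpa only [Finset.card_univ, Fintype.card_fin, hB2] using this
    · intro w _
      rw [isoEv, hbox, card_starD, Fintype.card_fin]
    · intro w _ w' _ hne
      have e : isoEv r y w ∩ isoEv r y w' =
          {X | ∀ d ∈ starD r w ∪ starD r w', X d ∈ (Set.Ioc y (2 * y))ᶜ} := by
        ext X
        simp only [isoEv, Set.mem_inter_iff, Set.mem_ofPred_eq, Finset.mem_union]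
        constructor
        · rintro ⟨h, h'⟩ d (hd | hd)
          · exact h d hd
          · exact h' d hd
        · intro h
          exact ⟨fun d hd => h d (Or.inl hd), fun d hd => h d (Or.inr hd)⟩
      rw [e, hbox, add_sub_cancel, ← div_eq_mul_inv, le_div_iff₀ (by positivity), ← pow_add,
        hqd, ← pow_mul]
      refine pow_le_pow_of_le_one hy.le (by linarith) ?_
      have h2 := Finset.card_union_add_card_inter (starD r w) (starD r w')
      have h3 := card_starD_inter (r := r) hne
      rw [card_starD, card_starD, Fintype.card_fin] at h2
      omega
  have hKpos : 0 < K := by positivity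
  have b3 : ν.real B3 ≤ 16 * Real.exp (r * n * y) / (n * (1 - y)) := by
    refine (markov_count ν (fun j : Fin n × PIdx (Fin n) r => pathEv y j.1 j.2.1 j.2.2.1 j.2.2.2)
      (fun j => pathEv_meas _ _ _ _ _) K hKpos).trans ?_
    refine (div_le_div_of_nonneg_right (sum_path_le n r y h0.le h1) hKpos.le).trans
      (le_of_eq ?_)
    rw [hK, ← hqd]
    field_simp
  have hsub : {X | ¬ ENNReal.ofReal T ≤ doubleAll (orderDisc (mkSample X))} ⊆
      (B1 ∪ B2) ∪ B3 := by
    intro X hX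
    by_contra hcon
    simp only [Set.mem_union, not_or] at hcon
    obtain ⟨⟨n1, n2⟩, n3⟩ := hcon
    apply hX
    simp only [hB1, hB2, hB3, Set.mem_ofPred_eq, not_le] at n1 n2 n3
    rw [← rank_mkSample, hsc] at n1
    have hT' : T ≤ rank (mkSample X) (2 * y) := hT.trans n1.le
    set I : Finset (Fin n) := Finset.univ.filter fun w => X ∈ isoEv r y w with hI
    set Bd : Finset (Fin n) := Finset.univ.filter fun w => n < 4 * (inB y X w).ncard with hBd
    have c1 : n * q / 2 < I.card := by
      have : ∑ w ∈ (Finset.univ : Finset (Fin n)),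
          (isoEv r y w).indicator (fun _ => (1 : ℝ)) X = I.card := by
        simp only [Set.indicator_apply, Finset.sum_boole, hI]
      rw [this, Finset.card_univ, Fintype.card_fin] at n2
      linarith
    have c2 : (Bd.card : ℝ) * (n / 4) < K := by
      refine lt_of_le_of_lt ?_ n3
      rw [Fintype.sum_prod_type]
      calc (Bd.card : ℝ) * (n / 4) = ∑ w ∈ Bd, (n : ℝ) / 4 := by simp
        _ ≤ ∑ w ∈ Bd, ((inB y X w).ncard : ℝ) := by
          refine Finset.sum_le_sum fun w hw => ?_
          have : n < 4 * (inB y X w).ncard := (Finset.mem_filter.1 hw).2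
          have : (n : ℝ) < 4 * (inB y X w).ncard := by exact_mod_cast this
          linarith
        _ ≤ ∑ w, ((inB y X w).ncard : ℝ) :=
          Finset.sum_le_sum_of_subset_of_nonneg (Finset.subset_univ _)
            fun _ _ _ => Nat.cast_nonneg _
        _ ≤ _ := Finset.sum_le_sum fun w _ => inB_card y X w
    have c3 : (Bd.card : ℝ) < n * q / 4 := by
      rw [hK] at c2
      have : (Bd.card : ℝ) * (n / 4) < (n * q / 4) * (n / 4) := by
        calc _ < _ := c2
          _ = _ := by ring
      exact lt_of_mul_lt_mul_right this (by positivity)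
    have c4 : 1 < (I \ Bd).card := by
      have h := Finset.le_card_sdiff Bd I
      have h' : I.card ≤ (I \ Bd).card + Bd.card := by omega
      have h'' : (I.card : ℝ) ≤ (I \ Bd).card + Bd.card := by exact_mod_cast h'
      have : (1 : ℝ) < (I \ Bd).card := by linarith
      exact_mod_cast this
    obtain ⟨w₁, hw₁, w₂, hw₂, hne⟩ := Finset.one_lt_card.1 c4
    simp only [hI, hBd, Finset.mem_sdiff, Finset.mem_filter, Finset.mem_univ, true_and,
      not_lt] at hw₁ hw₂
    exact double_ge hr hT' hne hw₁.1 hw₂.1 (by simpa using hw₁.2) (by simpa using hw₂.2)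
  refine (measureReal_mono hsub (measure_ne_top _ _)).trans ?_
  refine (measureReal_union_le _ _).trans ?_
  refine add_le_add ((measureReal_union_le _ _).trans (add_le_add b1 b2)) b3

/-! ### Asymptotics -/

/-- the time scale -/
def yy (r : ℕ) (a : ℝ) (n : ℕ) : ℝ := a * Real.log n / (r * n)

lemma log_nat_tendsto : Tendsto (fun n : ℕ => Real.log n) atTop atTop :=
  Real.tendsto_log_atTop.comp tendsto_natCast_atTop_atTop

lemma yy_tendsto (r : ℕ) (a : ℝ) : Tendsto (yy r a) atTop (𝓝 0) := by
  have h1 : Tendsto (fun n : ℕ => Real.log n / (n : ℝ)) atTop (𝓝 0) :=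
    (Real.isLittleO_log_id_atTop.tendsto_div_nhds_zero).comp tendsto_natCast_atTop_atTop
  have h2 := h1.const_mul (a / r)
  rw [mul_zero] at h2
  refine h2.congr fun n => ?_
  unfold yy
  rw [div_mul_div_comm]

lemma rn_yy (r : ℕ) (hr : 0 < r) (a : ℝ) (n : ℕ) (hn : 0 < n) :
    r * n * yy r a n = a * Real.log n := by
  unfold yy
  have : (0 : ℝ) < r := by exact_mod_cast hr
  have : (0 : ℝ) < n := by exact_mod_cast hn
  field_simp

lemma choose_yy (r : ℕ) (hr : 0 < r) (a : ℝ) (n : ℕ) (hn : 0 < n) :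
    ((n.choose 2 * r : ℕ) : ℝ) * (2 * yy r a n) = (n - 1) * (a * Real.log n) := by
  rw [← rn_yy r hr a n hn]
  push_cast
  rw [Nat.cast_choose_two]
  ring

lemma nq_tendsto (r : ℕ) (hr : 0 < r) (a : ℝ) (ha : 0 < a) (ha1 : a < 1) :
    Tendsto (fun n : ℕ => (n : ℝ) * (1 - yy r a n) ^ (r * (n - 1))) atTop atTop := by
  have hy := yy_tendsto r a
  have h1 : Tendsto (fun n => 1 - a / (1 - yy r a n)) atTop (𝓝 (1 - a / (1 - 0))) :=
    ((tendsto_const_nhds.div (tendsto_const_nhds.sub hy) (by norm_num))).const_sub 1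
  have h2 : Tendsto (fun n : ℕ => Real.log n * (1 - a / (1 - yy r a n))) atTop atTop :=
    log_nat_tendsto.atTop_mul_pos (by simpa using ha1) h1
  refine tendsto_atTop_mono' _ ?_ (Real.tendsto_exp_atTop.comp h2)
  have hlt : ∀ᶠ n in atTop, yy r a n < 1 / 2 := hy.eventually (gt_mem_nhds (by norm_num))
  filter_upwards [hlt, eventually_ge_atTop 2] with n hn hn2
  set y := yy r a n with hyd
  have hn0 : (0 : ℝ) < n := by positivity
  have hlog : 0 ≤ Real.log n := Real.log_nonneg (by exact_mod_cast (by omega : 1 ≤ n))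
  have hy0 : 0 ≤ y := by rw [hyd, yy]; positivity
  have hy1 : 0 < 1 - y := by linarith
  have e1 : Real.exp (-(y / (1 - y))) ≤ 1 - y := by
    rw [Real.exp_neg, inv_le_comm₀ (Real.exp_pos _) hy1]
    have := Real.add_one_le_exp (y / (1 - y))
    refine le_trans (le_of_eq ?_) this
    field_simp
    ring
  have e2 : Real.exp (-(a * Real.log n / (1 - y))) ≤ (1 - y) ^ (r * (n - 1)) := by
    calc Real.exp (-(a * Real.log n / (1 - y)))
        = Real.exp (-(y / (1 - y))) ^ (r * n) := by
          rw [← Real.exp_nat_mul, ← rn_yy r hr a n (by omega)]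
          congr 1
          push_cast
          ring
      _ ≤ (1 - y) ^ (r * n) := pow_le_pow_left₀ (Real.exp_pos _).le e1 _
      _ ≤ (1 - y) ^ (r * (n - 1)) := pow_le_pow_of_le_one hy1.le (by linarith)
          (Nat.mul_le_mul_left _ (by omega))
  calc (Real.exp ∘ fun n : ℕ => Real.log n * (1 - a / (1 - yy r a n))) n
      = n * Real.exp (-(a * Real.log n / (1 - y))) := by
        conv_rhs => rw [← Real.exp_log hn0, ← Real.exp_add, Real.log_exp]
        simp only [Function.comp]
        congr 1
        ring
    _ ≤ _ := mul_le_mul_of_nonneg_left e2 hn0.le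

lemma bound_tendsto (r : ℕ) (hr : 0 < r) (a η : ℝ) (ha : 0 < a) (ha1 : a < 1) :
    Tendsto (fun n : ℕ =>
    (1 / ((n.choose 2 * r : ℕ) * (2 * yy r a n)) + 0) / η ^ 2 +
    (1 / (n * (1 - yy r a n) ^ (r * (n - 1))) + (((1 - yy r a n) ^ r)⁻¹ - 1)) / (1 / 2) ^ 2 +
    16 * Real.exp (r * n * yy r a n) / (n * (1 - yy r a n))) atTop (𝓝 0) := by
  have hy := yy_tendsto r a
  have hy1 : Tendsto (fun n => 1 - yy r a n) atTop (𝓝 1) := by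
    simpa using hy.const_sub 1
  have t1 : Tendsto (fun n : ℕ => ((n.choose 2 * r : ℕ) : ℝ) * (2 * yy r a n)) atTop atTop := by
    have : Tendsto (fun n : ℕ => ((n : ℝ) - 1) * (a * Real.log n)) atTop atTop :=
      (tendsto_atTop_add_const_right _ (-1) tendsto_natCast_atTop_atTop).atTop_mul_atTop₀
        (log_nat_tendsto.const_mul_atTop ha)
    refine this.congr' ?_
    filter_upwards [eventually_gt_atTop 0] with n hn
    exact (choose_yy r hr a n hn).symm
  have t1' : Tendsto (fun n : ℕ => (1 / (((n.choose 2 * r : ℕ) : ℝ) * (2 * yy r a n)) + 0) /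
      η ^ 2) atTop (𝓝 0) := by
    have := ((t1.inv_tendsto_atTop).add_const 0).div_const (η ^ 2)
    simpa using this
  have t2 : Tendsto (fun n : ℕ => (1 / ((n : ℝ) * (1 - yy r a n) ^ (r * (n - 1))) +
      (((1 - yy r a n) ^ r)⁻¹ - 1)) / (1 / 2) ^ 2) atTop (𝓝 0) := by
    have h1 := (nq_tendsto r hr a ha ha1).inv_tendsto_atTop
    have h2 : Tendsto (fun n => ((1 - yy r a n) ^ r)⁻¹ - 1) atTop (𝓝 (((1 : ℝ) ^ r)⁻¹ - 1)) :=
      ((hy1.pow r).inv₀ (by simp)).sub_const 1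
    have := (h1.add h2).div_const ((1 / 2) ^ 2)
    simpa using this
  have t3 : Tendsto (fun n : ℕ => 16 * Real.exp (r * n * yy r a n) / (n * (1 - yy r a n)))
      atTop (𝓝 0) := by
    have h1 : Tendsto (fun n : ℕ => Real.exp (-((1 - a) * Real.log n))) atTop (𝓝 0) :=
      Real.tendsto_exp_neg_atTop_nhds_zero.comp
        (log_nat_tendsto.const_mul_atTop (by linarith))
    have h2 := ((h1.const_mul 16).div hy1 one_ne_zero)
    rw [mul_zero, zero_div] at h2
    refine h2.congr' ?_
    filter_upwards [eventually_gt_atTop 0] with n hn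
    have hn0 : (0 : ℝ) < n := by exact_mod_cast hn
    simp only [Pi.div_apply]
    rw [rn_yy r hr a n hn, ← div_div]
    congr 1
    rw [mul_div_assoc]
    congr 1
    rw [eq_div_iff hn0.ne']
    conv_lhs => rw [← Real.exp_log hn0, ← Real.exp_add, Real.log_exp]
    congr 1
    ring
  simpa using (t1'.add t2).add t3

/-- Lower bound for the doubling time of the order discretization of
`Γ_{[n]}(ψ)` with `ψ` degenerate at `r`: with high probability it is at least
`(1-ε)·n·log n`. -/
theorem statement19 (r : ℕ) (hr : 0 < r) (ε : ℝ) (hε : 0 < ε) :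
    Tendsto (fun n : ℕ =>
        contModel (Fin n) (Measure.dirac r) {ω |
          ENNReal.ofReal ((1 - ε) * n * Real.log n) ≤ doubleAll (orderDisc ω)})
      atTop (𝓝 1) := by
  rcases le_or_gt 1 ε with h1 | h1
  · have : ∀ n : ℕ, contModel (Fin n) (Measure.dirac r) {ω |
          ENNReal.ofReal ((1 - ε) * n * Real.log n) ≤ doubleAll (orderDisc ω)} = 1 := by
      intro n
      rw [contModel_apply]
      have e : (mkSample ⁻¹' {ω | ENNReal.ofReal ((1 - ε) * n * Real.log n) ≤
          doubleAll (orderDisc ω)} : Set (Sym2 (Fin n) × Fin r → ℝ)) = Set.univ := by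
        ext X
        have h0 : (1 - ε) * n * Real.log n ≤ 0 := by
          have hl : 0 ≤ Real.log n := Real.log_natCast_nonneg n
          have : (1 - ε) * n ≤ 0 :=
            mul_nonpos_of_nonpos_of_nonneg (by linarith) (Nat.cast_nonneg n)
          exact mul_nonpos_of_nonpos_of_nonneg this hl
        simp [ENNReal.ofReal_of_nonpos h0]
      rw [e, measure_univ]
    simp only [this]
    exact tendsto_const_nhds
  set a : ℝ := 1 - ε / 2 with ha
  set η : ℝ := ε / 4 with hη
  have ha0 : 0 < a := by rw [ha]; linarith
  have ha1 : a < 1 := by rw [ha]; linarith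
  have hη0 : 0 < η := by rw [hη]; linarith
  have hlim := bound_tendsto r hr a η ha0 ha1
  have hlim2 := ENNReal.Tendsto.sub (tendsto_const_nhds (x := (1 : ℝ≥0∞)))
    (ENNReal.tendsto_ofReal hlim) (Or.inl ENNReal.one_ne_top)
  rw [ENNReal.ofReal_zero, tsub_zero] at hlim2
  refine tendsto_of_tendsto_of_tendsto_of_le_of_le' hlim2 tendsto_const_nhds ?_ ?_
  · have hq := (nq_tendsto r hr a ha0 ha1).eventually_ge_atTop 8
    have hy := (yy_tendsto r a).eventually (gt_mem_nhds (show (0 : ℝ) < 1 / 2 by norm_num))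
    have hbig := (tendsto_natCast_atTop_atTop (R := ℝ)).eventually_ge_atTop (4 / ε)
    filter_upwards [hq, hy, hbig, eventually_ge_atTop 2] with n hq hy hbig hn
    have hlog : 0 < Real.log n := Real.log_pos (by exact_mod_cast (by omega : 1 < n))
    have hn0 : (0 : ℝ) < n := by exact_mod_cast (by omega : 0 < n)
    have hy0 : 0 < yy r a n := by
      unfold yy
      have : (0 : ℝ) < r := by exact_mod_cast hr
      positivity
    have hT : (1 - ε) * n * Real.log n ≤
        (1 - η) * ((n.choose 2 * r : ℕ) * (2 * yy r a n)) := by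
      rw [choose_yy r hr a n (by omega)]
      have hc : (1 - ε) * n ≤ (1 - η) * ((n - 1) * a) := by
        have h4 : 4 ≤ n * ε := (div_le_iff₀ hε).1 hbig
        rw [ha, hη]
        nlinarith [mul_nonneg (mul_nonneg hε.le hε.le) hn0.le]
      calc _ ≤ (1 - η) * ((n - 1) * a) * Real.log n := mul_le_mul_of_nonneg_right hc hlog.le
        _ = _ := by ring
    have hb := bad_bound n r hr hn (yy r a n) hy0 (by linarith) η _ hη0 hT hq
    rw [contModel_apply]
    rw [tsub_le_iff_right]
    have hu : (1 : ℝ≥0∞) ≤ unifPi (Sym2 (Fin n) × Fin r) (mkSample ⁻¹' {ω |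
          ENNReal.ofReal ((1 - ε) * n * Real.log n) ≤ doubleAll (orderDisc ω)}) +
        unifPi (Sym2 (Fin n) × Fin r) {X |
          ¬ ENNReal.ofReal ((1 - ε) * n * Real.log n) ≤ doubleAll (orderDisc (mkSample X))} := by
      rw [← measure_univ (μ := unifPi (Sym2 (Fin n) × Fin r))]
      refine (measure_mono ?_).trans (measure_union_le _ _)
      intro X _
      by_cases h : ENNReal.ofReal ((1 - ε) * n * Real.log n) ≤ doubleAll (orderDisc (mkSample X))
      · exact Or.inl h
      · exact Or.inr h
    refine hu.trans (add_le_add le_rfl ?_)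
    rw [← ofReal_measureReal (measure_ne_top _ _)]
    exact ENNReal.ofReal_le_ofReal hb
  · refine Eventually.of_forall fun n => ?_
    rw [contModel_apply]
    exact prob_le_one

end RTG
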